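/- arXiv:2007.01077 — 5 statements merged into one kernel-verified Lean document; each statement's English description precedes it below -/
import Mathlib

section
/- Let δ ∈ (0,1] and let Q(n), n ≥ t₀, be a sequence of N×N matrices with nonnegative entries such that every row sum of each Q(n) is at most 1 and Q(n)_{ii} ≥ δ for all i and n. Fix an index i and suppose the i-th row sum of Q(t₀) is at most 1 − δ. Then for every s ≥ 0, the i-th row sum of the product Q(t₀+s)·Q(t₀+s−1)·…·Q(t₀) is at most 1 − δ^{s+1}. -/
/-- `prodFrom Q t₀ s = Q (t₀+s) * ⋯ * Q (t₀+1) * Q t₀`. -/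
def prodFrom {N : ℕ} (Q : ℕ → Matrix (Fin N) (Fin N) ℝ) (t₀ : ℕ) :
    ℕ → Matrix (Fin N) (Fin N) ℝ
  | 0 => Q t₀
  | s + 1 => Q (t₀ + s + 1) * prodFrom Q t₀ s

/-- for nonnegative substochastic matrices `Q n` (`n ≥ t₀`) with diagonal
entries at least `δ`, if the `i`-th row sum of `Q t₀` is at most `1 - δ`, then the
`i`-th row sum of the product `Q (t₀+s) · ⋯ · Q t₀` is at most `1 - δ^(s+1)`. -/
theorem stmt_3 (N : ℕ) (δ : ℝ) (hδ0 : 0 < δ) (hδ1 : δ ≤ 1) (t₀ : ℕ)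
    (Q : ℕ → Matrix (Fin N) (Fin N) ℝ)
    (hpos : ∀ n, t₀ ≤ n → ∀ i j, 0 ≤ Q n i j)
    (hrow : ∀ n, t₀ ≤ n → ∀ i, ∑ j, Q n i j ≤ 1)
    (hdiag : ∀ n, t₀ ≤ n → ∀ i, δ ≤ Q n i i)
    (i : Fin N)
    (hstart : ∑ j, Q t₀ i j ≤ 1 - δ) :
    ∀ s : ℕ, ∑ j, prodFrom Q t₀ s i j ≤ 1 - δ ^ (s + 1) := by
  have key : ∀ s k, ∑ j, prodFrom Q t₀ (s + 1) k j
      = ∑ l, Q (t₀ + s + 1) k l * ∑ j, prodFrom Q t₀ s l j := by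
    intro s k
    simp only [prodFrom, Matrix.mul_apply, Finset.mul_sum]
    exact Finset.sum_comm
  have hle : ∀ s k, ∑ j, prodFrom Q t₀ s k j ≤ 1 := by
    intro s
    induction s with
    | zero => exact fun k => hrow t₀ le_rfl k
    | succ s ih =>
      intro k
      rw [key]
      refine le_trans (Finset.sum_le_sum fun l _ => ?_) (hrow (t₀ + s + 1) (by omega) k)
      exact mul_le_of_le_one_right (hpos _ (by omega) k l) (ih l)
  intro s
  induction s with
  | zero => simpa [prodFrom] using hstart
  | succ s ih =>
    rw [key]
    have hq := hrow (t₀ + s + 1) (by omega) i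
    have hd := hdiag (t₀ + s + 1) (by omega) i
    have h1 : Q (t₀ + s + 1) i i * (1 - ∑ j, prodFrom Q t₀ s i j)
        ≤ ∑ l, Q (t₀ + s + 1) i l * (1 - ∑ j, prodFrom Q t₀ s l j) :=
      Finset.single_le_sum
        (f := fun l => Q (t₀ + s + 1) i l * (1 - ∑ j, prodFrom Q t₀ s l j))
        (fun l _ => mul_nonneg (hpos _ (by omega) i l) (sub_nonneg.2 (hle s l)))
        (Finset.mem_univ i)
    have h2 : ∑ l, Q (t₀ + s + 1) i l * (1 - ∑ j, prodFrom Q t₀ s l j)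
        = ∑ l, Q (t₀ + s + 1) i l
          - ∑ l, Q (t₀ + s + 1) i l * ∑ j, prodFrom Q t₀ s l j := by
      rw [← Finset.sum_sub_distrib]
      exact Finset.sum_congr rfl fun l _ => by ring
    have h3 : δ * δ ^ (s + 1) ≤ Q (t₀ + s + 1) i i * (1 - ∑ j, prodFrom Q t₀ s i j) :=
      mul_le_mul hd (by linarith) (by positivity) (hδ0.le.trans hd)
    have h4 : δ ^ (s + 1 + 1) = δ * δ ^ (s + 1) := by ring
    linarith
end

section
/- Let m, p ∈ ℕ and for t ≥ t₀ let Q(t) ∈ ℝ^{m×m}, R(t) ∈ ℝ^{m×p}, S(t) ∈ ℝ^{p×p} be nonnegative matrices such that the block matrix A(t) = [[Q(t), R(t)],[0, S(t)]] is row stochastic. Suppose: (i) the products S(t:t₀) = S(t)·S(t−1)·…·S(t₀) converge to a matrix S as t → ∞; (ii) there exist L ∈ ℕ, L ≥ 1, and γ ∈ (0,1] such that every product of L consecutive matrices Q(n) has ‖·‖_∞ at most 1 − γ; and (iii) there exists a row-stochastic matrix M ∈ ℝ^{m×p} such that ε(t) := R(t)·S − (I − Q(t))·M converges to the zero matrix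 as t → ∞. Then the block R(t:t₀) of the product A(t:t₀) = A(t)·A(t−1)·…·A(t₀), which satisfies the recursion R(t:t₀) = Q(t)·R(t−1:t₀) + R(t)·S(t−1:t₀), converges to M as t → ∞; consequently A(t:t₀) converges to [[0, M],[0, S]]. -/
open Filter Matrix

/-- `consProd M s k = M (s+k-1) * ⋯ * M (s+1) * M s` (and `consProd M s 0 = 1`). -/
def consProd {p : ℕ} (M : ℕ → Matrix (Fin p) (Fin p) ℝ) (s : ℕ) :
    ℕ → Matrix (Fin p) (Fin p) ℝ
  | 0 => 1
  | k + 1 => M (s + k) * consProd M s k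

/-- `rProd Q R S t₀ k` is the upper-right block of the product of the `k` block matrices
`[[Q t, R t],[0, S t]]` for `t = t₀ + k - 1, …, t₀`, satisfying the recursion
`R(t:t₀) = Q(t) · R(t-1:t₀) + R(t) · S(t-1:t₀)`. -/
def rProd {m p : ℕ} (Q : ℕ → Matrix (Fin m) (Fin m) ℝ)
    (R : ℕ → Matrix (Fin m) (Fin p) ℝ) (S : ℕ → Matrix (Fin p) (Fin p) ℝ)
    (t₀ : ℕ) : ℕ → Matrix (Fin m) (Fin p) ℝ
  | 0 => 0
  | k + 1 => Q (t₀ + k) * rProd Q R S t₀ k + R (t₀ + k) * consProd S t₀ k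

theorem scalar_aux (a d : ℕ → ℝ) (L : ℕ) (hL : 1 ≤ L) (γ : ℝ) (hγ0 : 0 < γ) (hγ1 : γ ≤ 1)
    (ha : ∀ k, 0 ≤ a k) (hd : Tendsto d atTop (nhds 0))
    (h : ∀ k, a (k + L) ≤ (1 - γ) * a k + d k) : Tendsto a atTop (nhds 0) := by
  rw [Metric.tendsto_atTop]
  intro ε hε
  have h1 : ∀ᶠ k in atTop, d k < γ * (ε / 2) := hd.eventually_lt_const (by positivity)
  obtain ⟨K, hK⟩ := eventually_atTop.1 h1
  set C : ℝ := ∑ r ∈ Finset.range L, |a (K + r) - ε / 2| with hC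
  have key : ∀ q r, r < L → a (K + r + q * L) - ε / 2 ≤ (1 - γ) ^ q * C := by
    intro q r hr
    induction q with
    | zero =>
      have := Finset.single_le_sum (f := fun r => |a (K + r) - ε / 2|)
        (fun i _ => abs_nonneg _) (Finset.mem_range.2 hr)
      have h2 := le_abs_self (a (K + r) - ε / 2)
      simp only [zero_mul, add_zero, pow_zero, one_mul]
      exact h2.trans this
    | succ q ih =>
      have h2 := h (K + r + q * L)
      have h3 := hK (K + r + q * L) (by omega)
      have h4 := mul_le_mul_of_nonneg_left ih (sub_nonneg.2 hγ1)
      have h5 : K + r + (q + 1) * L = K + r + q * L + L := by ring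
      rw [h5, pow_succ]
      nlinarith
  have hdiv : Tendsto (fun n : ℕ => n / L) atTop atTop :=
    Nat.tendsto_div_const_atTop (by omega)
  have hp : Tendsto (fun q : ℕ => (1 - γ) ^ q * C) atTop (nhds 0) := by
    simpa using (tendsto_pow_atTop_nhds_zero_of_lt_one (sub_nonneg.2 hγ1)
      (by linarith : 1 - γ < 1)).mul_const C
  obtain ⟨N, hN⟩ := eventually_atTop.1
    ((hp.comp hdiv).eventually_lt_const (by positivity : (0 : ℝ) < ε / 2))
  refine ⟨K + N, fun k hk => ?_⟩
  obtain ⟨n, rfl⟩ := Nat.exists_eq_add_of_le (show K ≤ k by omega)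
  have h6 := key (n / L) (n % L) (Nat.mod_lt _ (by omega))
  have h7 : K + n % L + n / L * L = K + n := by
    have := Nat.mod_add_div' n L
    omega
  rw [h7] at h6
  have h8 := hN n (by omega)
  simp only [Function.comp] at h8
  rw [Real.dist_eq, sub_zero, abs_of_nonneg (ha _)]
  linarith

section
open scoped Matrix.Norms.Operator

theorem linfty_le_aux {m p : ℕ} (A : Matrix (Fin m) (Fin p) ℝ) (c : ℝ) (hc : 0 ≤ c)
    (h : ∀ i, ∑ j, |A i j| ≤ c) : ‖A‖ ≤ c := by
  rw [Matrix.linfty_opNorm_def]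
  lift c to NNReal using hc
  rw [NNReal.coe_le_coe, Finset.sup_le_iff]
  intro i _
  rw [← NNReal.coe_le_coe]
  simpa using h i

theorem recur_aux {m p : ℕ} (t₀ : ℕ) (Q : ℕ → Matrix (Fin m) (Fin m) ℝ)
    (E D : ℕ → Matrix (Fin m) (Fin p) ℝ)
    (hQ1 : ∀ t, t₀ ≤ t → ∀ i, ∑ j, |Q t i j| ≤ 1)
    (L : ℕ) (hL : 1 ≤ L) (γ : ℝ) (hγ0 : 0 < γ) (hγ1 : γ ≤ 1)
    (hQ : ∀ s, t₀ ≤ s → ∀ i, ∑ j, |consProd Q s L i j| ≤ 1 - γ)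
    (hE : ∀ k, E (k + 1) = Q (t₀ + k) * E k + D k)
    (hD : Tendsto D atTop (nhds 0)) : Tendsto E atTop (nhds 0) := by
  refine tendsto_zero_iff_norm_tendsto_zero.2 ?_
  have hDn : Tendsto (fun k => ‖D k‖) atTop (nhds 0) :=
    tendsto_zero_iff_norm_tendsto_zero.1 hD
  refine scalar_aux (fun k => ‖E k‖) (fun k => ∑ i ∈ Finset.range L, ‖D (k + i)‖) L hL γ hγ0 hγ1
    (fun k => norm_nonneg _) ?_ ?_
  · rw [← Finset.sum_const_zero (s := Finset.range L)]
    exact tendsto_finsetSum _ fun i _ => hDn.comp (tendsto_add_atTop_nat i)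
  · intro k
    have key : ∀ j, ‖E (k + j) - consProd Q (t₀ + k) j * E k‖
        ≤ ∑ i ∈ Finset.range j, ‖D (k + i)‖ := by
      intro j
      induction j with
      | zero => simp [consProd]
      | succ j ih =>
        have e1 : E (k + (j + 1)) - consProd Q (t₀ + k) (j + 1) * E k
            = Q (t₀ + k + j) * (E (k + j) - consProd Q (t₀ + k) j * E k) + D (k + j) := by
          rw [← add_assoc k j 1, hE, consProd, Matrix.mul_sub, Matrix.mul_assoc, add_assoc t₀ k j]
          abel
        rw [e1, Finset.sum_range_succ]
        refine (norm_add_le _ _).trans (add_le_add ?_ le_rfl)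
        refine (Matrix.linfty_opNorm_mul _ _).trans ?_
        have h1 := linfty_le_aux _ 1 zero_le_one (hQ1 (t₀ + k + j) (by omega))
        have h2 := mul_le_mul_of_nonneg_right h1
          (norm_nonneg (E (k + j) - consProd Q (t₀ + k) j * E k))
        linarith
    have h1 := key L
    have h2 := linfty_le_aux _ (1 - γ) (sub_nonneg.2 hγ1) (hQ (t₀ + k) (by omega))
    have h3 := Matrix.linfty_opNorm_mul (consProd Q (t₀ + k) L) (E k)
    have h4 := mul_le_mul_of_nonneg_right h2 (norm_nonneg (E k))
    have h5 := norm_add_le (E (k + L) - consProd Q (t₀ + k) L * E k)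
      (consProd Q (t₀ + k) L * E k)
    rw [sub_add_cancel] at h5
    show ‖E (k + L)‖ ≤ (1 - γ) * ‖E k‖ + _
    linarith

theorem bdd_mul_aux {m p : ℕ} (R : ℕ → Matrix (Fin m) (Fin p) ℝ)
    (T : ℕ → Matrix (Fin p) (Fin p) ℝ) (hR : ∀ k i, ∑ j, |R k i j| ≤ 1)
    (hT : Tendsto T atTop (nhds 0)) : Tendsto (fun k => R k * T k) atTop (nhds 0) := by
  refine tendsto_zero_iff_norm_tendsto_zero.2 ?_
  refine squeeze_zero (fun _ => norm_nonneg _) (fun k => ?_)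
    (tendsto_zero_iff_norm_tendsto_zero.1 hT)
  have h1 := linfty_le_aux _ 1 zero_le_one (hR k)
  have h2 := mul_le_mul_of_nonneg_right h1 (norm_nonneg (T k))
  have h3 := Matrix.linfty_opNorm_mul (R k) (T k)
  linarith

end

/-- for row-stochastic block matrices `A(t) = [[Q(t), R(t)],[0, S(t)]]`
(`t ≥ t₀`), if (i) the products `S(t:t₀)` converge to `S`, (ii) every product of `L`
consecutive `Q`'s has maximum absolute row sum at most `1 - γ`, and (iii)
`R(t)·S - (I - Q(t))·M → 0` for a row-stochastic `M`, then `R(t:t₀) → M` and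
`A(t:t₀) → [[0, M],[0, S]]`. -/
theorem stmt_6 (m p t₀ : ℕ)
    (Q : ℕ → Matrix (Fin m) (Fin m) ℝ)
    (R : ℕ → Matrix (Fin m) (Fin p) ℝ)
    (S : ℕ → Matrix (Fin p) (Fin p) ℝ)
    (hstoch : ∀ t, t₀ ≤ t →
      (∀ i j, 0 ≤ Matrix.fromBlocks (Q t) (R t) 0 (S t) i j) ∧
      ∀ i, ∑ j, Matrix.fromBlocks (Q t) (R t) 0 (S t) i j = 1)
    (Slim : Matrix (Fin p) (Fin p) ℝ)
    (hS : Tendsto (fun k => consProd S t₀ k) atTop (nhds Slim))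
    (L : ℕ) (hL : 1 ≤ L) (γ : ℝ) (hγ0 : 0 < γ) (hγ1 : γ ≤ 1)
    (hQ : ∀ s, t₀ ≤ s → ∀ i, ∑ j, |consProd Q s L i j| ≤ 1 - γ)
    (M : Matrix (Fin m) (Fin p) ℝ)
    (hM : (∀ i j, 0 ≤ M i j) ∧ ∀ i, ∑ j, M i j = 1)
    (hε : Tendsto (fun t => R t * Slim - (1 - Q t) * M) atTop
      (nhds (0 : Matrix (Fin m) (Fin p) ℝ))) :
    Tendsto (fun k => rProd Q R S t₀ k) atTop (nhds M) ∧
    Tendsto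
      (fun k => Matrix.fromBlocks (consProd Q t₀ k) (rProd Q R S t₀ k) 0 (consProd S t₀ k))
      atTop (nhds (Matrix.fromBlocks 0 M 0 Slim)) := by
  have hpos : ∀ t, t₀ ≤ t → ∀ i, (∀ j, 0 ≤ Q t i j) ∧ (∀ j, 0 ≤ R t i j) ∧
      ∑ j, Q t i j + ∑ j, R t i j = 1 := by
    intro t ht i
    obtain ⟨h1, h2⟩ := hstoch t ht
    refine ⟨fun j => h1 (Sum.inl i) (Sum.inl j), fun j => h1 (Sum.inl i) (Sum.inr j), ?_⟩
    simpa [Fintype.sum_sum_type] using h2 (Sum.inl i)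
  have hQ1 : ∀ t, t₀ ≤ t → ∀ i, ∑ j, |Q t i j| ≤ 1 := by
    intro t ht i
    obtain ⟨h1, h2, h3⟩ := hpos t ht i
    simp only [abs_of_nonneg (h1 _)]
    have := Finset.sum_nonneg (s := Finset.univ) fun j _ => h2 j
    linarith
  have hR1 : ∀ t, t₀ ≤ t → ∀ i, ∑ j, |R t i j| ≤ 1 := by
    intro t ht i
    obtain ⟨h1, h2, h3⟩ := hpos t ht i
    simp only [abs_of_nonneg (h2 _)]
    have := Finset.sum_nonneg (s := Finset.univ) fun j _ => h1 j
    linarith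
  have hQlim : Tendsto (fun k => consProd Q t₀ k) atTop (nhds 0) :=
    recur_aux t₀ Q _ (fun _ => 0) hQ1 L hL γ hγ0 hγ1 hQ
      (fun k => by rw [consProd, add_zero]) tendsto_const_nhds
  have hT : Tendsto (fun k => consProd S t₀ k - Slim) atTop (nhds 0) := by
    simpa using hS.sub_const Slim
  have hD1 := bdd_mul_aux (fun k => R (t₀ + k)) _ (fun k => hR1 (t₀ + k) (by omega)) hT
  have hD2 : Tendsto (fun k => R (t₀ + k) * Slim - (1 - Q (t₀ + k)) * M) atTop (nhds 0) :=
    hε.comp (tendsto_atTop_mono (fun k => Nat.le_add_left k t₀) tendsto_id)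
  have hD := hD1.add hD2
  rw [add_zero] at hD
  have hElim := recur_aux t₀ Q (fun k => rProd Q R S t₀ k - M) _ hQ1 L hL γ hγ0 hγ1 hQ
    (fun k => by
      simp only [rProd, Matrix.mul_sub, Matrix.sub_mul, Matrix.one_mul]
      abel) hD
  have hRlim : Tendsto (fun k => rProd Q R S t₀ k) atTop (nhds M) := by
    simpa using hElim.add_const M
  refine ⟨hRlim, ?_⟩
  have hc : Continuous fun x : Matrix (Fin m) (Fin m) ℝ × Matrix (Fin m) (Fin p) ℝ ×
      Matrix (Fin p) (Fin p) ℝ => Matrix.fromBlocks x.1 x.2.1 0 x.2.2 :=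
    Continuous.matrix_fromBlocks (by fun_prop) (by fun_prop) (by fun_prop) (by fun_prop)
  exact (hc.tendsto (0, M, Slim)).comp
    (hQlim.prodMk_nhds (hRlim.prodMk_nhds hS))
end

section
/- Let Λ = diag(λ_1,…,λ_N) with λ_i ∈ (0,1] for every i, let A(t) be a sequence of N×N row-stochastic matrices converging to a row-stochastic matrix A, and let b(t) ∈ ℝ^N be a sequence converging to b ∈ ℝ^N. Then for every initial vector x(0) ∈ ℝ^N, the dynamics x(t+1) = (I−Λ)A(t)x(t) + Λb(t) converge to the steady state x* = (I − (I−Λ)A)^{-1} Λ b; in particular the limit does not depend on x(0). -/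
open Filter

lemma aux_seq (a d : ℕ → ℝ) (c : ℝ) (hc0 : 0 ≤ c) (hc1 : c < 1) (ha : ∀ t, 0 ≤ a t)
    (hd : Tendsto d atTop (nhds 0)) (h : ∀ t, a (t + 1) ≤ c * a t + d t) :
    Tendsto a atTop (nhds 0) := by
  rw [Metric.tendsto_atTop]
  intro ε hε
  have hpos : 0 < (1 - c) * (ε / 2) := mul_pos (by linarith) (by linarith)
  obtain ⟨T, hT⟩ := eventually_atTop.1 (hd.eventually (gt_mem_nhds hpos))
  have key : ∀ k, a (T + k) ≤ c ^ k * a T + ε / 2 := by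
    intro k
    induction k with
    | zero => simp; linarith
    | succ k ih =>
      have h1 := h (T + k)
      have h2 := hT (T + k) (by omega)
      have h3 := mul_le_mul_of_nonneg_left ih hc0
      have h4 : c ^ (k + 1) * a T = c * (c ^ k * a T) := by ring
      rw [← add_assoc, h4]
      linarith
  have hlim : Tendsto (fun k : ℕ => c ^ k * a T) atTop (nhds 0) := by
    simpa using (tendsto_pow_atTop_nhds_zero_of_lt_one hc0 hc1).mul_const (a T)
  obtain ⟨K, hK⟩ := eventually_atTop.1 (hlim.eventually (gt_mem_nhds (half_pos hε)))
  refine ⟨T + K, fun n hn => ?_⟩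
  obtain ⟨k, rfl⟩ := Nat.exists_eq_add_of_le (show T ≤ n by omega)
  have h1 := key k
  have h2 := hK k (by omega)
  rw [Real.dist_eq, sub_zero, abs_of_nonneg (ha _)]
  linarith

lemma aux_contr (N : ℕ) (lam : Fin N → ℝ) (c : ℝ) (hc0 : 0 ≤ c)
    (hc : ∀ i, |1 - lam i| ≤ c) (A : Matrix (Fin N) (Fin N) ℝ)
    (hA : (∀ i j, 0 ≤ A i j) ∧ ∀ i, ∑ j, A i j = 1) (v : Fin N → ℝ) :
    ‖((1 - Matrix.diagonal lam) * A).mulVec v‖ ≤ c * ‖v‖ := by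
  rw [pi_norm_le_iff_of_nonneg (by positivity)]
  intro i
  have e : ((1 - Matrix.diagonal lam) * A).mulVec v i = (1 - lam i) * ∑ j, A i j * v j := by
    rw [← Matrix.mulVec_mulVec, Matrix.sub_mulVec, Matrix.one_mulVec, Pi.sub_apply,
      Matrix.mulVec_diagonal]
    simp only [Matrix.mulVec, dotProduct]
    ring
  rw [e, norm_mul, Real.norm_eq_abs]
  refine mul_le_mul (hc i) ?_ (norm_nonneg _) hc0
  calc ‖∑ j, A i j * v j‖ ≤ ∑ j, A i j * ‖v‖ := by
        refine norm_sum_le_of_le _ fun j _ => ?_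
        rw [norm_mul, Real.norm_of_nonneg (hA.1 i j)]
        exact mul_le_mul_of_nonneg_left (norm_le_pi_norm v j) (hA.1 i j)
    _ = ‖v‖ := by rw [← Finset.sum_mul, hA.2 i, one_mul]

/-- for `Λ = diag(λ)` with `λ i ∈ (0,1]`, row-stochastic `A(t) → A`
(with `A` row stochastic) and `b(t) → b`, the dynamics
`x(t+1) = (I-Λ)A(t)x(t) + Λb(t)` converge, for every initial vector `x(0)`, to
`x* = (I - (I-Λ)A)⁻¹ Λ b`; in particular the limit does not depend on `x(0)`. -/
theorem stmt_10 (N : ℕ) (lam : Fin N → ℝ) (hlam : ∀ i, 0 < lam i ∧ lam i ≤ 1)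
    (A : ℕ → Matrix (Fin N) (Fin N) ℝ) (Alim : Matrix (Fin N) (Fin N) ℝ)
    (hAstoch : ∀ t, (∀ i j, 0 ≤ A t i j) ∧ ∀ i, ∑ j, A t i j = 1)
    (hAlim : (∀ i j, 0 ≤ Alim i j) ∧ ∀ i, ∑ j, Alim i j = 1)
    (hAconv : Tendsto A atTop (nhds Alim))
    (b : ℕ → Fin N → ℝ) (blim : Fin N → ℝ)
    (hb : Tendsto b atTop (nhds blim))
    (x : ℕ → Fin N → ℝ)
    (hx : ∀ t, x (t + 1) =
      ((1 - Matrix.diagonal lam) * A t).mulVec (x t) + (Matrix.diagonal lam).mulVec (b t)) :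
    Tendsto x atTop
      (nhds ((1 - (1 - Matrix.diagonal lam) * Alim)⁻¹.mulVec
        ((Matrix.diagonal lam).mulVec blim))) := by
  obtain ⟨c, hc0, hc1, hc⟩ : ∃ c : ℝ, 0 ≤ c ∧ c < 1 ∧ ∀ i, |1 - lam i| ≤ c := by
    refine ⟨‖fun i => 1 - lam i‖, norm_nonneg _, ?_, fun i => ?_⟩
    · rw [pi_norm_lt_iff one_pos]
      intro i
      rw [Real.norm_eq_abs, abs_lt]
      constructor <;> linarith [(hlam i).1, (hlam i).2]
    · exact norm_le_pi_norm (fun i => 1 - lam i) i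
  set D := Matrix.diagonal lam with hD
  have hunit : IsUnit (1 - (1 - D) * Alim) := by
    rw [← Matrix.mulVec_injective_iff_isUnit]
    intro u w huw
    have h0 : (1 - (1 - D) * Alim).mulVec (u - w) = 0 := by
      rw [Matrix.mulVec_sub, sub_eq_zero]; exact huw
    rw [Matrix.sub_mulVec, Matrix.one_mulVec, sub_eq_zero] at h0
    have h1 := aux_contr N lam c hc0 hc Alim hAlim (u - w)
    rw [← hD, ← h0] at h1
    have h2 : ‖u - w‖ = 0 := by nlinarith [norm_nonneg (u - w)]
    exact sub_eq_zero.1 (norm_eq_zero.1 h2)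
  set y := (1 - (1 - D) * Alim)⁻¹.mulVec (D.mulVec blim) with hy
  have hfix : y - ((1 - D) * Alim).mulVec y = D.mulVec blim := by
    have : (1 - (1 - D) * Alim).mulVec y = D.mulVec blim := by
      rw [hy, Matrix.mulVec_mulVec, Matrix.mul_nonsing_inv _ ((Matrix.isUnit_iff_isUnit_det _).1 hunit),
        Matrix.one_mulVec]
    rwa [Matrix.sub_mulVec, Matrix.one_mulVec] at this
  have hd : Tendsto (fun t => ((1 - D) * A t).mulVec y + D.mulVec (b t) - y) atTop (nhds 0) := by
    have hcont : Continuous (fun p : Matrix (Fin N) (Fin N) ℝ × (Fin N → ℝ) =>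
        ((1 - D) * p.1).mulVec y + D.mulVec p.2 - y) := by fun_prop
    have h1 := (hcont.tendsto (Alim, blim)).comp (hAconv.prodMk_nhds hb)
    have h2 : ((1 - D) * Alim).mulVec y + D.mulVec blim - y = 0 := by
      rw [← hfix]; abel
    simpa only [Function.comp_def, h2] using h1
  rw [tendsto_iff_norm_sub_tendsto_zero]
  refine aux_seq _ (fun t => ‖((1 - D) * A t).mulVec y + D.mulVec (b t) - y‖) c hc0 hc1
    (fun _ => norm_nonneg _) (by simpa using hd.norm) fun t => ?_
  have e : x (t + 1) - y = ((1 - D) * A t).mulVec (x t - y)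
      + (((1 - D) * A t).mulVec y + D.mulVec (b t) - y) := by
    rw [hx t, Matrix.mulVec_sub]; abel
  rw [e]
  refine (norm_add_le _ _).trans ?_
  gcongr
  exact aux_contr N lam c hc0 hc (A t) (hAstoch t) _
end

section
/- Let A be an N×N row-stochastic matrix, Λ = diag(λ_1,…,λ_N) with λ_i ∈ (0,1] for every i, and W an N×p nonnegative matrix each of whose rows sums to 1, so that the (N+p)×(N+p) block matrix Ã = [[(I−Λ)A, ΛW],[0, I_p]] is row stochastic. Then the powers of Ã converge: lim_{t→∞} Ã^t = [[0, F·Λ·W],[0, I_p]], where F = (I − (I−Λ)A)^{-1}. -/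
open Filter Matrix

section helper
attribute [local instance] Matrix.linftyOpNormedRing Matrix.linftyOpNormedAlgebra

theorem helper_conv (N : ℕ) (B : Matrix (Fin N) (Fin N) ℝ)
    (hB : ∀ i, ∑ j, |B i j| < 1) :
    Tendsto (fun t : ℕ => B ^ t) atTop (nhds 0) ∧ IsUnit (1 - B) := by
  have hn : ‖B‖ < 1 := by
    rw [Matrix.linfty_opNorm_def]
    have : (Finset.univ.sup fun i => ∑ j, ‖B i j‖₊) < (1 : NNReal) := by
      rw [Finset.sup_lt_iff (by simp)]
      intro i _
      rw [← NNReal.coe_lt_coe]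
      push_cast
      simpa using hB i
    exact_mod_cast this
  haveI : CompleteSpace (Matrix (Fin N) (Fin N) ℝ) := FiniteDimensional.complete ℝ _
  exact ⟨tendsto_pow_atTop_nhds_zero_of_norm_lt_one hn, isUnit_one_sub_of_norm_lt_one hn⟩

end helper

theorem helper_pow (N p : ℕ) (B : Matrix (Fin N) (Fin N) ℝ) (C : Matrix (Fin N) (Fin p) ℝ)
    (F : Matrix (Fin N) (Fin N) ℝ) (hF : F * (1 - B) = 1) (t : ℕ) :
    (Matrix.fromBlocks B C 0 (1 : Matrix (Fin p) (Fin p) ℝ)) ^ t =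
      Matrix.fromBlocks (B ^ t) (F * (1 - B ^ t) * C) 0 1 := by
  induction t with
  | zero => simp
  | succ t ih =>
    rw [pow_succ, ih, Matrix.fromBlocks_multiply]
    have h : B ^ t + F * (1 - B ^ t) = F * (1 - B ^ (t + 1)) := by
      calc B ^ t + F * (1 - B ^ t) = (F * (1 - B)) * B ^ t + F * (1 - B ^ t) := by
            rw [hF, one_mul]
        _ = _ := by rw [pow_succ']; noncomm_ring
    rw [← h]
    simp [pow_succ, Matrix.add_mul]

/-- for a row-stochastic `A`, `Λ = diag(λ)` with `λ i ∈ (0,1]`, and a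
nonnegative `W` with unit row sums, the augmented row-stochastic matrix
`Ã = [[(I-Λ)A, ΛW],[0, I]]` has convergent powers:
`Ã^t → [[0, F·Λ·W],[0, I]]` where `F = (I - (I-Λ)A)⁻¹`. -/
theorem stmt_12 (N p : ℕ) (A : Matrix (Fin N) (Fin N) ℝ) (lam : Fin N → ℝ)
    (W : Matrix (Fin N) (Fin p) ℝ)
    (hA : (∀ i j, 0 ≤ A i j) ∧ ∀ i, ∑ j, A i j = 1)
    (hlam : ∀ i, 0 < lam i ∧ lam i ≤ 1)
    (hW : (∀ i j, 0 ≤ W i j) ∧ ∀ i, ∑ j, W i j = 1) :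
    Tendsto
      (fun t =>
        (Matrix.fromBlocks ((1 - Matrix.diagonal lam) * A) (Matrix.diagonal lam * W)
          0 (1 : Matrix (Fin p) (Fin p) ℝ)) ^ t)
      atTop
      (nhds (Matrix.fromBlocks 0
        ((1 - (1 - Matrix.diagonal lam) * A)⁻¹ * Matrix.diagonal lam * W)
        0 (1 : Matrix (Fin p) (Fin p) ℝ))) := by
  set B := (1 - Matrix.diagonal lam) * A with hBdef
  have hBe : ∀ i j, B i j = (1 - lam i) * A i j := by
    intro i j
    simp [hBdef, Matrix.sub_mul, sub_mul]
  have hB : ∀ i, ∑ j, |B i j| < 1 := by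
    intro i
    have : ∑ j, |B i j| = 1 - lam i := by
      rw [← mul_one (1 - lam i), ← hA.2 i, Finset.mul_sum]
      refine Finset.sum_congr rfl fun j _ => ?_
      rw [hBe, abs_of_nonneg (mul_nonneg (by linarith [(hlam i).2]) (hA.1 i j)), hA.2 i]
    linarith [(hlam i).1]
  obtain ⟨h0, hu⟩ := helper_conv N B hB
  have hF : (1 - B)⁻¹ * (1 - B) = 1 :=
    Matrix.nonsing_inv_mul _ ((Matrix.isUnit_iff_isUnit_det _).1 hu)
  simp_rw [helper_pow N p B (Matrix.diagonal lam * W) _ hF]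
  have hc : Continuous fun X : Matrix (Fin N) (Fin N) ℝ =>
      Matrix.fromBlocks X ((1 - B)⁻¹ * (1 - X) * (Matrix.diagonal lam * W)) 0
        (1 : Matrix (Fin p) (Fin p) ℝ) := by
    refine Continuous.matrix_fromBlocks continuous_id ?_ continuous_const continuous_const
    fun_prop
  have := (hc.tendsto 0).comp h0
  simpa [Function.comp_def, Matrix.mul_assoc] using this
end

section
/- Let A be an N×N row-stochastic matrix, α ∈ (1/2, 1), and x(0) ∈ [−1,1]^N with x_i(0) ≠ 0 for every i. Define the recommender dynamics x(t+1) = (1−α)·A·x(t) + α·σ(x(t)), where σ(x) is the vector of componentwise signs sign(x_i) ∈ {−1,+1}. Then for all t and all i: x_i(t) ∈ [−1,1] and sign(x_i(t)) = sign(x_i(0)); moreover x(t) converges as t → ∞ to x* = α·(I − (1−α)A)^{-1}·σ(x(0)). -/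
open Filter

/-- The sign function: `+1` for positive reals, `-1` otherwise (only applied to
nonzero values here). -/
noncomputable def sgn (y : ℝ) : ℝ := if 0 < y then 1 else -1

theorem stoch_norm_le {N : ℕ} (A : Matrix (Fin N) (Fin N) ℝ)
    (hA : (∀ i j, 0 ≤ A i j) ∧ ∀ i, ∑ j, A i j = 1) (v : Fin N → ℝ) :
    ‖A.mulVec v‖ ≤ ‖v‖ := by
  rw [pi_norm_le_iff_of_nonneg (norm_nonneg v)]
  intro i
  calc ‖A.mulVec v i‖ = ‖∑ j, A i j * v j‖ := rfl
    _ ≤ ∑ j, ‖A i j * v j‖ := norm_sum_le _ _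
    _ ≤ ∑ j, A i j * ‖v‖ := by
        apply Finset.sum_le_sum
        intro j _
        rw [norm_mul, Real.norm_of_nonneg (hA.1 i j)]
        exact mul_le_mul_of_nonneg_left (norm_le_pi_norm v j) (hA.1 i j)
    _ = ‖v‖ := by rw [← Finset.sum_mul, hA.2 i, one_mul]

/-- recommender dynamics `x(t+1) = (1-α)·A·x(t) + α·σ(x(t))` with
row-stochastic `A`, `α ∈ (1/2, 1)` and `x(0) ∈ [-1,1]^N` with nonzero entries: the
states stay in `[-1,1]`, signs never change, and
`x(t) → x* = α·(I - (1-α)A)⁻¹·σ(x(0))`. -/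
theorem stmt_14 (N : ℕ) (A : Matrix (Fin N) (Fin N) ℝ) (α : ℝ)
    (hA : (∀ i j, 0 ≤ A i j) ∧ ∀ i, ∑ j, A i j = 1)
    (hα : 1 / 2 < α ∧ α < 1)
    (x : ℕ → Fin N → ℝ)
    (hx0 : ∀ i, x 0 i ∈ Set.Icc (-1 : ℝ) 1 ∧ x 0 i ≠ 0)
    (hdyn : ∀ t, x (t + 1) =
      (1 - α) • A.mulVec (x t) + α • fun i => sgn (x t i)) :
    (∀ t i, x t i ∈ Set.Icc (-1 : ℝ) 1 ∧ sgn (x t i) = sgn (x 0 i)) ∧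
    Tendsto x atTop
      (nhds (α • (1 - (1 - α) • A)⁻¹.mulVec fun i => sgn (x 0 i))) := by
  have hβ : 0 < 1 - α := by linarith [hα.2]
  have h1 : ∀ t i, x t i ∈ Set.Icc (-1 : ℝ) 1 ∧ sgn (x t i) = sgn (x 0 i) := by
    intro t
    induction t with
    | zero => exact fun i => ⟨(hx0 i).1, rfl⟩
    | succ t ih =>
      intro i
      have hn : ‖x t‖ ≤ 1 := by
        rw [pi_norm_le_iff_of_nonneg zero_le_one]
        intro j
        rw [Real.norm_eq_abs, abs_le]
        exact (ih j).1
      have hb : |A.mulVec (x t) i| ≤ 1 :=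
        ((norm_le_pi_norm (A.mulVec (x t)) i).trans (stoch_norm_le A hA (x t))).trans hn
      rw [abs_le] at hb
      have he : x (t + 1) i = (1 - α) * A.mulVec (x t) i + α * sgn (x 0 i) := by
        rw [hdyn t, ← (ih i).2]
        rfl
      rw [he]
      have ha := mul_le_mul_of_nonneg_left hb.1 hβ.le
      have hc := mul_le_mul_of_nonneg_left hb.2 hβ.le
      by_cases h : 0 < x 0 i
      · have hs : sgn (x 0 i) = 1 := if_pos h
        rw [hs]
        refine ⟨⟨by linarith, by linarith⟩, if_pos (by linarith)⟩
      · have hs : sgn (x 0 i) = -1 := if_neg h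
        rw [hs]
        refine ⟨⟨by linarith, by linarith⟩, if_neg (by linarith)⟩
  refine ⟨h1, ?_⟩
  have hinj : IsUnit (1 - (1 - α) • A) := by
    rw [← Matrix.mulVec_injective_iff_isUnit]
    intro v w hvw
    have h : v - w = (1 - α) • A.mulVec (v - w) := by
      simp only [Matrix.sub_mulVec, Matrix.one_mulVec, Matrix.smul_mulVec] at hvw
      rw [Matrix.mulVec_sub, smul_sub, sub_eq_sub_iff_sub_eq_sub]
      exact hvw
    have hn : ‖v - w‖ ≤ (1 - α) * ‖v - w‖ := by
      calc ‖v - w‖ = ‖(1 - α) • A.mulVec (v - w)‖ := by rw [← h]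
        _ = (1 - α) * ‖A.mulVec (v - w)‖ := by rw [norm_smul, Real.norm_of_nonneg hβ.le]
        _ ≤ _ := mul_le_mul_of_nonneg_left (stoch_norm_le A hA _) hβ.le
    have h0 : ‖v - w‖ = 0 := by nlinarith [norm_nonneg (v - w), hα.1]
    exact sub_eq_zero.mp (norm_eq_zero.mp h0)
  set s : Fin N → ℝ := fun i => sgn (x 0 i) with hs
  set y : Fin N → ℝ := α • (1 - (1 - α) • A)⁻¹.mulVec s with hy
  have hfix : y = (1 - α) • A.mulVec y + α • s := by
    have h : (1 - (1 - α) • A).mulVec y = α • s := by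
      rw [hy, Matrix.mulVec_smul, Matrix.mulVec_mulVec,
        Matrix.mul_nonsing_inv _ ((Matrix.isUnit_iff_isUnit_det _).mp hinj), Matrix.one_mulVec]
    rw [Matrix.sub_mulVec, Matrix.one_mulVec, Matrix.smul_mulVec] at h
    rw [← h]
    abel
  have hstep : ∀ t, ‖x t - y‖ ≤ (1 - α) ^ t * ‖x 0 - y‖ := by
    intro t
    induction t with
    | zero => simp
    | succ t ih =>
      have h : x (t + 1) - y = (1 - α) • A.mulVec (x t - y) := by
        have hst : (fun i => sgn (x t i)) = s := funext fun i => (h1 t i).2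
        rw [hdyn t, hst, Matrix.mulVec_sub, smul_sub]
        nth_rewrite 1 [hfix]
        abel
      calc ‖x (t + 1) - y‖ = (1 - α) * ‖A.mulVec (x t - y)‖ := by
            rw [h, norm_smul, Real.norm_of_nonneg hβ.le]
        _ ≤ (1 - α) * ((1 - α) ^ t * ‖x 0 - y‖) :=
            mul_le_mul_of_nonneg_left ((stoch_norm_le A hA _).trans ih) hβ.le
        _ = _ := by ring
  rw [tendsto_iff_norm_sub_tendsto_zero]
  have hlim : Tendsto (fun t : ℕ => (1 - α) ^ t * ‖x 0 - y‖) atTop (nhds 0) := by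
    have := (tendsto_pow_atTop_nhds_zero_of_lt_one hβ.le (by linarith [hα.1])).mul_const ‖x 0 - y‖
    simpa using this
  exact squeeze_zero (fun t => norm_nonneg _) hstep hlim
end
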